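/- Let A be a matrix obtained from a normalized Hadamard matrix H of order ν by replacing every −1 entry with 0, and let x, y be two distinct columns of A other than the all-ones column. Then among the ν rows, each of the four patterns (0,0), (0,1), (1,0), (1,1) for (x_i, y_i) occurs exactly ν/4 times. -/

import Mathlib

open Finset

theorem stmt_8 (ν : ℕ) (hν : 4 ≤ ν) (H : Matrix (Fin ν) (Fin ν) ℝ)
    (hentries : ∀ i c, H i c = 1 ∨ H i c = -1)
    (horth : ∀ c c' : Fin ν, c ≠ c' → ∑ i, H i c * H i c' = 0)
    (hnormrow : ∀ c, H ⟨0, by omega⟩ c = 1)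
    (hnormcol : ∀ i, H i ⟨0, by omega⟩ = 1)
    (A : Matrix (Fin ν) (Fin ν) ℝ)
    (hA : ∀ i c, A i c = if H i c = 1 then 1 else 0)
    (a b : Fin ν) (hab : a ≠ b)
    (ha : (fun i => A i a) ≠ fun _ => 1) (hb : (fun i => A i b) ≠ fun _ => 1) :
    (univ.filter fun i => A i a = 0 ∧ A i b = 0).card = ν / 4 ∧
    (univ.filter fun i => A i a = 0 ∧ A i b = 1).card = ν / 4 ∧
    (univ.filter fun i => A i a = 1 ∧ A i b = 0).card = ν / 4 ∧
    (univ.filter fun i => A i a = 1 ∧ A i b = 1).card = ν / 4 := by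
  have ha0 : a ≠ ⟨0, by omega⟩ := by
    rintro rfl
    exact ha (funext fun i => by rw [hA, if_pos (hnormcol i)])
  have hb0 : b ≠ ⟨0, by omega⟩ := by
    rintro rfl
    exact hb (funext fun i => by rw [hA, if_pos (hnormcol i)])
  have sa : ∑ i, H i a = 0 := by
    have h := horth _ _ ha0
    simpa only [hnormcol, mul_one] using h
  have sb : ∑ i, H i b = 0 := by
    have h := horth _ _ hb0
    simpa only [hnormcol, mul_one] using h
  have sab := horth a b hab
  have key : ∀ (s t : ℝ) (p : Fin ν → Prop) [DecidablePred p],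
      (∀ i, (if p i then (1 : ℝ) else 0) =
        1 / 4 + s * H i a + t * H i b + 4 * s * t * (H i a * H i b)) →
      (univ.filter p).card = ν / 4 := by
    intro s t p _ h
    have h1 : ((univ.filter p).card : ℝ) = ν * (1 / 4) := by
      rw [Finset.card_filter]
      push_cast
      rw [Finset.sum_congr rfl fun i _ => h i]
      simp only [Finset.sum_add_distrib, ← Finset.mul_sum, sa, sb, sab]
      simp
    have h2 : 4 * (univ.filter p).card = ν := by
      have : (4 : ℝ) * ((univ.filter p).card : ℝ) = ν := by rw [h1]; ring
      exact_mod_cast this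
    omega
  refine ⟨key (-1/4) (-1/4) _ ?_, key (-1/4) (1/4) _ ?_, key (1/4) (-1/4) _ ?_,
    key (1/4) (1/4) _ ?_⟩ <;>
  · intro i
    rw [hA, hA]
    rcases hentries i a with h | h <;> rcases hentries i b with h' | h' <;> rw [h, h'] <;> norm_num
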